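/- For every level t there exist n ≥ 1 and levels u₁, …, uₙ, each generated by the restricted grammar u ::= sᵏ(x) | sᵏ(0) | imax(u, x) (where k ∈ ℕ and x is a variable, so every second argument of imax is a variable and successors occur only at the innermost position), such that for every valuation σ, ⟦t⟧σ = max(⟦u₁⟧σ, …, ⟦uₙ⟧σ). -/

import Mathlib

/-- The impredicative maximum on natural numbers. -/
def imaxN : ℕ → ℕ → ℕ
  | _, 0 => 0
  | i, (j+1) => max i (j+1)

/-- Levels: t ::= 0 | s(t) | x | max(t,t) | imax(t,t). -/
inductive Lvl where
  | zero : Lvl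
  | succ : Lvl → Lvl
  | var : ℕ → Lvl
  | lmax : Lvl → Lvl → Lvl
  | limax : Lvl → Lvl → Lvl

/-- Value of a level under a valuation. -/
def evalL (σ : ℕ → ℕ) : Lvl → ℕ
  | .zero => 0
  | .succ t => evalL σ t + 1
  | .var x => σ x
  | .lmax u v => max (evalL σ u) (evalL σ v)
  | .limax u v => imaxN (evalL σ u) (evalL σ v)

/-- Maximum of a list of naturals, 0 for the empty list. -/
def listMax (l : List ℕ) : ℕ := l.foldr max 0

/-- The restricted grammar u ::= sᵏ(x) | sᵏ(0) | imax(u, x). -/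
inductive Restricted : Lvl → Prop where
  | var (k x : ℕ) : Restricted (Lvl.succ^[k] (Lvl.var x))
  | zero (k : ℕ) : Restricted (Lvl.succ^[k] Lvl.zero)
  | imax {u : Lvl} (x : ℕ) : Restricted u → Restricted (.limax u (.var x))

/-!
Let `M` be the set of functions of a valuation that are finite nonempty maxima of values of
restricted levels. Both successor and `imax`, in each of its arguments, commute with binary maxima,
so it is enough to apply them to values of restricted levels. There the identities
`imax(i, j) + 1 = max(j + 1, imax(i + 1, j))` and
`imax(i, imax(j, k)) = max(imax(i, k), imax(j, k))` push successors inwards and `imax` out of the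
second argument of `imax`, while `imax(i, 0) = 0` and `imax(i, j + 1) = max(i, j + 1)` remove the
remaining `imax` whose second argument is not a variable. So `M` is closed under all level
constructors.
-/

theorem mapsTo_supClosure_of_map_sup {α β : Type*} [SemilatticeSup α] [SemilatticeSup β]
    {F : α → β} {s : Set α} {t : Set β}
    (map_sup : ∀ a b, F (a ⊔ b) = F a ⊔ F b) (h : Set.MapsTo F s (supClosure t)) :
    Set.MapsTo F (supClosure s) (supClosure t) :=
  supClosure_min h (supClosed_supClosure.preimage (⟨F, map_sup⟩ : SupHom α β))

theorem listMax_append (l₁ l₂ : List ℕ) :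
    listMax (l₁ ++ l₂) = max (listMax l₁) (listMax l₂) :=
  Multiset.sup_add (l₁ : Multiset ℕ) (l₂ : Multiset ℕ)

theorem imaxN_eq_ite (i j : ℕ) : imaxN i j = if j = 0 then 0 else max i j := by
  cases j <;> rfl

theorem imaxN_max_left (i j k : ℕ) : imaxN (max i j) k = max (imaxN i k) (imaxN j k) := by
  grind [imaxN_eq_ite]

theorem imaxN_max_right (i j k : ℕ) : imaxN i (max j k) = max (imaxN i j) (imaxN i k) := by
  grind [imaxN_eq_ite]

theorem imaxN_add_one (i j : ℕ) : imaxN i j + 1 = max (j + 1) (imaxN (i + 1) j) := by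
  grind [imaxN_eq_ite]

theorem imaxN_imaxN_right (i j k : ℕ) :
    imaxN i (imaxN j k) = max (imaxN i k) (imaxN j k) := by
  grind [imaxN_eq_ite]

theorem evalL_succ_iterate (σ : ℕ → ℕ) (k : ℕ) (t : Lvl) :
    evalL σ (Lvl.succ^[k] t) = evalL σ t + k := by
  induction k with
  | zero => rfl
  | succ k ih => rw [Function.iterate_succ_apply', evalL, ih, Nat.add_assoc]

/-- The value of a level as a function of the valuation, so that `t =_T u` is equality of
denotations and `max` becomes the pointwise supremum. -/
def Lvl.denote (t : Lvl) : (ℕ → ℕ) → ℕ := fun σ => evalL σ t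

theorem Lvl.denote_succ_iterate_var (k x : ℕ) :
    (Lvl.succ^[k] (.var x)).denote = fun σ => σ x + k :=
  funext fun σ => evalL_succ_iterate σ k (.var x)

theorem Lvl.denote_succ_iterate_zero (k : ℕ) : (Lvl.succ^[k] .zero).denote = fun _ => k :=
  funext fun σ => (evalL_succ_iterate σ k .zero).trans (Nat.zero_add k)

/-- The functions of a valuation that are maxima of finitely many, and at least one, restricted
levels. -/
def restrictedMaxima : Set ((ℕ → ℕ) → ℕ) := supClosure (Lvl.denote '' {u | Restricted u})

namespace restrictedMaxima

variable {f g : (ℕ → ℕ) → ℕ} {u : Lvl}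

theorem sup_mem (hf : f ∈ restrictedMaxima) (hg : g ∈ restrictedMaxima) :
    f ⊔ g ∈ restrictedMaxima :=
  supClosed_supClosure hf hg

theorem denote_mem_of_restricted (hu : Restricted u) : u.denote ∈ restrictedMaxima :=
  subset_supClosure ⟨u, hu, rfl⟩

theorem var_add_mem (x k : ℕ) : (fun σ => σ x + k) ∈ restrictedMaxima :=
  Lvl.denote_succ_iterate_var k x ▸ denote_mem_of_restricted (Restricted.var k x)

theorem const_mem (k : ℕ) : (fun _ => k) ∈ restrictedMaxima :=
  Lvl.denote_succ_iterate_zero k ▸ denote_mem_of_restricted (Restricted.zero k)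

theorem imax_var_mem (x : ℕ) (hf : f ∈ restrictedMaxima) :
    (fun σ => imaxN (f σ) (σ x)) ∈ restrictedMaxima := by
  refine mapsTo_supClosure_of_map_sup (F := fun f σ => imaxN (f σ) (σ x)) ?_ ?_ hf
  · exact fun f g => funext fun σ => imaxN_max_left (f σ) (g σ) (σ x)
  · rintro _ ⟨u, hu, rfl⟩
    exact denote_mem_of_restricted (Restricted.imax x hu)

theorem denote_add_one_mem_of_restricted (hu : Restricted u) :
    (fun σ => u.denote σ + 1) ∈ restrictedMaxima := by
  induction hu with
  | var k x =>
    rw [Lvl.denote_succ_iterate_var]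
    exact var_add_mem x (k + 1)
  | zero k =>
    rw [Lvl.denote_succ_iterate_zero]
    exact const_mem (k + 1)
  | imax x _ ih =>
    simp only [Lvl.denote, evalL, imaxN_add_one]
    exact sup_mem (var_add_mem x 1) (imax_var_mem x ih)

theorem add_one_mem (hf : f ∈ restrictedMaxima) : (fun σ => f σ + 1) ∈ restrictedMaxima := by
  refine mapsTo_supClosure_of_map_sup (F := fun f σ => f σ + 1) ?_ ?_ hf
  · exact fun f g => funext fun σ => (Nat.add_max_add_right (f σ) (g σ) 1).symm
  · rintro _ ⟨u, hu, rfl⟩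
    exact denote_add_one_mem_of_restricted hu

theorem imax_denote_mem_of_restricted (hf : f ∈ restrictedMaxima) (hu : Restricted u) :
    (fun σ => imaxN (f σ) (u.denote σ)) ∈ restrictedMaxima := by
  cases hu with
  | var k x =>
    rw [Lvl.denote_succ_iterate_var]
    cases k with
    | zero => exact imax_var_mem x hf
    | succ k => exact sup_mem hf (var_add_mem x (k + 1))
  | zero k =>
    rw [Lvl.denote_succ_iterate_zero]
    cases k with
    | zero => exact const_mem 0
    | succ k => exact sup_mem hf (const_mem (k + 1))
  | imax x hv =>
    simp only [Lvl.denote, evalL, imaxN_imaxN_right]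
    exact sup_mem (imax_var_mem x hf) (imax_var_mem x (denote_mem_of_restricted hv))

theorem imax_mem (hf : f ∈ restrictedMaxima) (hg : g ∈ restrictedMaxima) :
    (fun σ => imaxN (f σ) (g σ)) ∈ restrictedMaxima := by
  refine mapsTo_supClosure_of_map_sup (F := fun g σ => imaxN (f σ) (g σ)) ?_ ?_ hg
  · exact fun g h => funext fun σ => imaxN_max_right (f σ) (g σ) (h σ)
  · rintro _ ⟨u, hu, rfl⟩
    exact imax_denote_mem_of_restricted hf hu

theorem denote_mem (t : Lvl) : t.denote ∈ restrictedMaxima := by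
  induction t with
  | zero => exact const_mem 0
  | succ t ht => exact add_one_mem ht
  | var x => exact var_add_mem x 0
  | lmax u v hu hv => exact sup_mem hu hv
  | limax u v hu hv => exact imax_mem hu hv

theorem exists_list_eq_listMax (hf : f ∈ restrictedMaxima) :
    ∃ l : List Lvl, l ≠ [] ∧ (∀ u ∈ l, Restricted u) ∧
      ∀ σ : ℕ → ℕ, f σ = listMax (l.map (evalL σ)) := by
  refine supClosure_min (t := {f | ∃ l : List Lvl, l ≠ [] ∧ (∀ u ∈ l, Restricted u) ∧
    ∀ σ : ℕ → ℕ, f σ = listMax (l.map (evalL σ))}) ?_ ?_ hf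
  · rintro _ ⟨u, hu, rfl⟩
    exact ⟨[u], List.cons_ne_nil _ _, List.forall_mem_singleton.2 hu,
      fun σ => (Nat.max_zero (evalL σ u)).symm⟩
  · rintro f ⟨l₁, hne, hl₁, hf⟩ g ⟨l₂, -, hl₂, hg⟩
    refine ⟨l₁ ++ l₂, List.append_ne_nil_of_left_ne_nil hne l₂,
      List.forall_mem_append.2 ⟨hl₁, hl₂⟩, fun σ => ?_⟩
    rw [Pi.sup_apply, hf, hg, List.map_append, listMax_append]

end restrictedMaxima

theorem level_as_max_of_restricted (t : Lvl) :
    ∃ l : List Lvl, l ≠ [] ∧ (∀ u ∈ l, Restricted u) ∧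
      ∀ σ : ℕ → ℕ, evalL σ t = listMax (l.map (evalL σ)) :=
  restrictedMaxima.exists_list_eq_listMax (restrictedMaxima.denote_mem t)
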